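/- Let (X,d) be a proper geodesic metric space, L : [0,∞) → [0,∞) increasing, convex, superlinear with L(0)=0, H its Legendre transform, and g : X → ℝ Lipschitz. Then for every x ∈ X and every t > 0, liminf_{s → 0⁺} (Q_{t+s} g(x) − Q_t g(x))/s ≥ −H(|∇⁻ Q_t g|(x)), where |∇⁻ Q_t g|(x) is the metric subgradient of y ↦ Q_t g(y) at x. -/

import Mathlib

open Metric Filter NNReal Topology

/-- Hopf–Lax (infimum-convolution) semigroup, with `Q_0 g = g`. -/
noncomputable def hopfLaxQ {X : Type*} [MetricSpace X] (L : ℝ → ℝ) (g : X → ℝ)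
    (t : ℝ) (x : X) : ℝ :=
  if t = 0 then g x else ⨅ y : X, (t * L (dist x y / t) + g y)

/-- The (one-dimensional) Legendre transform `H(w) = sup_{v ≥ 0} (w·v − L(v))`. -/
noncomputable def legendreH (L : ℝ → ℝ) (w : ℝ) : ℝ :=
  sSup ((fun v => w * v - L v) '' Set.Ici 0)

/-- The metric subgradient `|∇⁻ f|(x₀) = limsup_{x → x₀} [f(x₀) − f(x)]₊ / d(x,x₀)`. -/
noncomputable def metricSubgradient {X : Type*} [MetricSpace X] (f : X → ℝ) (x₀ : X) : ℝ :=
  limsup (fun x => max (f x₀ - f x) 0 / dist x x₀) (𝓝[≠] x₀)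

/-!
With `f = Q_t g`, splitting a geodesic from `x` to a competitor `y` in the ratio `s : t` keeps the
speed `d(x, y) / (t + s)` on both pieces, so `Q_s f ≤ Q_{t+s} g`. It therefore suffices to bound
`Q_s f(x)` below to first order at `s = 0`. Since `f` is Lipschitz and `L` superlinear, only points
at distance `v s` with bounded `v` compete in `Q_s f(x)`. For them `f(x) - f(y) ≤ p d(x, y)` once
`p > |∇⁻ f|(x)` and `s` is small, so the cost is at least `f(x) - s (p v - L v) ≥ f(x) - s H(p)`;
let `p` decrease to `|∇⁻ f|(x)`, using that the finite convex function `H` is continuous.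
-/

theorem bddBelow_image_Ici_of_monotoneOn {α β : Type*} [Preorder α] [Preorder β]
    {φ : α → β} {a : α} (hφ : MonotoneOn φ (Set.Ici a)) : BddBelow (φ '' Set.Ici a) :=
  hφ.map_bddBelow subset_rfl ⟨a, fun _ h => h, Set.self_mem_Ici⟩

/-- A space in which any two points are joined by points dividing their distance in every ratio;
for complete spaces this is equivalent to the existence of minimizing geodesics. -/
def IsGeodesicSpace (X : Type*) [PseudoMetricSpace X] : Prop :=
  ∀ x y : X, ∀ τ : ℝ, 0 ≤ τ → τ ≤ 1 →
    ∃ z : X, dist x z = τ * dist x y ∧ dist z y = (1 - τ) * dist x y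

theorem IsGeodesicSpace.exists_dist_le_and_dist_le {X : Type*} [PseudoMetricSpace X]
    (hgeo : IsGeodesicSpace X) {a y : X} {r ρ : ℝ} (hr : 0 ≤ r) (hρ : 0 ≤ ρ)
    (h : dist a y ≤ r + ρ) : ∃ z, dist a z ≤ r ∧ dist z y ≤ ρ := by
  rcases le_or_gt (dist a y) r with hle | hlt
  · exact ⟨y, hle, by simpa⟩
  · have hpos : 0 < dist a y := hr.trans_lt hlt
    obtain ⟨z, haz, hzy⟩ := hgeo a y (r / dist a y) (by positivity) ((div_le_one hpos).2 hlt.le)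
    rw [div_mul_cancel₀ _ hpos.ne'] at haz
    rw [sub_mul, one_mul, div_mul_cancel₀ _ hpos.ne'] at hzy
    exact ⟨z, haz.le, by linarith⟩

/-- Superlinear growth at `+∞`, which makes the Legendre transform finite at every slope. -/
def IsSuperlinear (L : ℝ → ℝ) : Prop :=
  Tendsto (fun u => L u / u) atTop atTop

section Legendre

variable {L : ℝ → ℝ}

theorem IsSuperlinear.eventually_mul_add_le (hsuper : IsSuperlinear L) (a b : ℝ) :
    ∀ᶠ v in atTop, a * v + b ≤ L v := by
  filter_upwards [tendsto_atTop.1 hsuper (a + |b|), eventually_ge_atTop 1] with v hv hv1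
  have habs : |b| ≤ |b| * v := le_mul_of_one_le_right (abs_nonneg b) hv1
  calc a * v + b ≤ (a + |b|) * v := by linarith [le_abs_self b]
    _ ≤ L v := (le_div_iff₀ (zero_lt_one.trans_le hv1)).1 hv

theorem IsSuperlinear.bddAbove_mul_sub (hsuper : IsSuperlinear L)
    (hbdd : BddBelow (L '' Set.Ici 0)) (w : ℝ) :
    BddAbove ((fun v => w * v - L v) '' Set.Ici 0) := by
  obtain ⟨c, hc⟩ := hbdd
  obtain ⟨R, hR⟩ := eventually_atTop.1 (hsuper.eventually_mul_add_le w 0)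
  refine ⟨max 0 (|w| * R - c), Set.forall_mem_image.2 fun v (hv : 0 ≤ v) => ?_⟩
  rcases le_total R v with hRv | hvR
  · exact le_max_of_le_left (by linarith [hR v hRv])
  · have hwv : w * v ≤ |w| * R :=
      mul_le_mul (le_abs_self w) hvR hv (abs_nonneg w)
    have hcv : c ≤ L v := hc (Set.mem_image_of_mem L hv)
    exact le_max_of_le_right (by linarith)

theorem IsSuperlinear.mul_sub_le_legendreH (hsuper : IsSuperlinear L)
    (hbdd : BddBelow (L '' Set.Ici 0)) (w : ℝ) {v : ℝ} (hv : 0 ≤ v) :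
    w * v - L v ≤ legendreH L w :=
  le_csSup (hsuper.bddAbove_mul_sub hbdd w) ⟨v, hv, rfl⟩

theorem IsSuperlinear.convexOn_legendreH (hsuper : IsSuperlinear L)
    (hbdd : BddBelow (L '' Set.Ici 0)) : ConvexOn ℝ Set.univ (legendreH L) := by
  refine ⟨convex_univ, fun p _ q _ a b ha hb hab => ?_⟩
  refine csSup_le (Set.nonempty_Ici.image _) (Set.forall_mem_image.2 fun v hv => ?_)
  have hp := mul_le_mul_of_nonneg_left (hsuper.mul_sub_le_legendreH hbdd p hv) ha
  have hq := mul_le_mul_of_nonneg_left (hsuper.mul_sub_le_legendreH hbdd q hv) hb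
  simp only [smul_eq_mul]
  calc (a * p + b * q) * v - L v = a * (p * v - L v) + b * (q * v - L v) := by
        linear_combination L v * hab
    _ ≤ a * legendreH L p + b * legendreH L q := add_le_add hp hq

theorem IsSuperlinear.continuous_legendreH (hsuper : IsSuperlinear L)
    (hbdd : BddBelow (L '' Set.Ici 0)) : Continuous (legendreH L) :=
  continuousOn_univ.1 ((hsuper.convexOn_legendreH hbdd).continuousOn isOpen_univ)

end Legendre

section HopfLax

variable {X : Type*} [MetricSpace X] {L : ℝ → ℝ} {f g : X → ℝ} {K : ℝ≥0} {s t : ℝ}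

theorem le_hopfLaxQ {a : ℝ} (ht : 0 < t) (x : X) (h : ∀ y, a ≤ t * L (dist x y / t) + g y) :
    a ≤ hopfLaxQ L g t x := by
  have : Nonempty X := ⟨x⟩
  rw [hopfLaxQ, if_neg ht.ne']
  exact le_ciInf h

-- Fenchel–Young with slope `p`, of which the part `K` absorbs the variation of `g`.
theorem add_mul_dist_sub_le_hopfLax_cost (hsuper : IsSuperlinear L)
    (hbdd : BddBelow (L '' Set.Ici 0)) (hg : LipschitzWith K g) (ht : 0 < t) (p : ℝ) (x y : X) :
    g x + (p - K) * dist x y - t * legendreH L p ≤ t * L (dist x y / t) + g y := by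
  have hyoung := mul_le_mul_of_nonneg_left
    (hsuper.mul_sub_le_legendreH hbdd p (v := dist x y / t) (by positivity)) ht.le
  have hscale : t * (p * (dist x y / t) - L (dist x y / t)) =
      p * dist x y - t * L (dist x y / t) := by
    field_simp
  linarith [hg.le_add_mul x y]

theorem hopfLaxQ_le (hsuper : IsSuperlinear L) (hbdd : BddBelow (L '' Set.Ici 0))
    (hg : LipschitzWith K g) (ht : 0 < t) (x y : X) :
    hopfLaxQ L g t x ≤ t * L (dist x y / t) + g y := by
  rw [hopfLaxQ, if_neg ht.ne']
  refine ciInf_le ⟨g x - t * legendreH L K, Set.forall_mem_range.2 fun z => ?_⟩ y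
  simpa using add_mul_dist_sub_le_hopfLax_cost hsuper hbdd hg ht K x z

theorem IsGeodesicSpace.lipschitzWith_hopfLaxQ (hgeo : IsGeodesicSpace X)
    (hmono : MonotoneOn L (Set.Ici 0)) (hsuper : IsSuperlinear L) (hg : LipschitzWith K g)
    (ht : 0 < t) : LipschitzWith K (hopfLaxQ L g t) := by
  refine LipschitzWith.of_le_add_mul K fun a b => sub_le_iff_le_add.1 ?_
  refine le_hopfLaxQ ht b fun y => ?_
  obtain ⟨z, haz, hzy⟩ := hgeo.exists_dist_le_and_dist_le (r := dist b y) dist_nonneg dist_nonneg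
    ((dist_triangle a b y).trans_eq (add_comm _ _))
  have hQ : hopfLaxQ L g t a ≤ t * L (dist a z / t) + g z :=
    hopfLaxQ_le hsuper (bddBelow_image_Ici_of_monotoneOn hmono) hg ht a z
  have hL : L (dist a z / t) ≤ L (dist b y / t) :=
    hmono (Set.mem_Ici.2 (by positivity)) (Set.mem_Ici.2 (by positivity)) (by gcongr)
  have hgz : g z ≤ g y + K * dist a b := (hg.le_add_mul z y).trans (by gcongr)
  linarith [mul_le_mul_of_nonneg_left hL ht.le]

theorem IsGeodesicSpace.hopfLaxQ_hopfLaxQ_le (hgeo : IsGeodesicSpace X)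
    (hmono : MonotoneOn L (Set.Ici 0)) (hsuper : IsSuperlinear L) (hg : LipschitzWith K g)
    (hs : 0 < s) (ht : 0 < t) (x : X) :
    hopfLaxQ L (hopfLaxQ L g t) s x ≤ hopfLaxQ L g (t + s) x := by
  have hbdd := bddBelow_image_Ici_of_monotoneOn hmono
  have hts : 0 < t + s := add_pos ht hs
  refine le_hopfLaxQ hts x fun y => ?_
  obtain ⟨z, hxz, hzy⟩ := hgeo x y (s / (t + s)) (by positivity) ((div_le_one hts).2 (by linarith))
  have hspeed_xz : dist x z / s = dist x y / (t + s) := by rw [hxz]; field_simp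
  have hspeed_zy : dist z y / t = dist x y / (t + s) := by rw [hzy]; field_simp; ring
  calc hopfLaxQ L (hopfLaxQ L g t) s x
      ≤ s * L (dist x z / s) + hopfLaxQ L g t z :=
        hopfLaxQ_le hsuper hbdd (hgeo.lipschitzWith_hopfLaxQ hmono hsuper hg ht) hs x z
    _ ≤ s * L (dist x z / s) + (t * L (dist z y / t) + g y) := by
        gcongr
        exact hopfLaxQ_le hsuper hbdd hg ht z y
    _ = (t + s) * L (dist x y / (t + s)) + g y := by rw [hspeed_xz, hspeed_zy]; ring

theorem exists_hopfLaxQ_add_le (hmono : MonotoneOn L (Set.Ici 0)) (hsuper : IsSuperlinear L)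
    (hg : LipschitzWith K g) (ht : 0 < t) (x : X) :
    ∃ C, ∀ s > 0, hopfLaxQ L g (t + s) x ≤ hopfLaxQ L g t x + C * s := by
  have hbdd := bddBelow_image_Ici_of_monotoneOn hmono
  have : Nonempty X := ⟨x⟩
  set ρ := hopfLaxQ L g t x + 1 - g x + t * legendreH L (K + 1)
  refine ⟨L (ρ / t) + 1, fun s hs => ?_⟩
  obtain ⟨y, hy⟩ : ∃ y, t * L (dist x y / t) + g y < hopfLaxQ L g t x + min s 1 := by
    apply exists_lt_of_ciInf_lt
    rw [hopfLaxQ, if_neg ht.ne']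
    exact lt_add_of_pos_right _ (by positivity)
  have hnear : dist x y ≤ ρ := by
    have := add_mul_dist_sub_le_hopfLax_cost hsuper hbdd hg ht (K + 1) x y
    linarith [min_le_right s 1]
  have hslower : L (dist x y / (t + s)) ≤ L (dist x y / t) :=
    hmono (Set.mem_Ici.2 (by positivity)) (Set.mem_Ici.2 (by positivity))
      (by gcongr; linarith)
  have hspeed : L (dist x y / t) ≤ L (ρ / t) :=
    hmono (Set.mem_Ici.2 (by positivity))
      (Set.mem_Ici.2 (div_nonneg (dist_nonneg.trans hnear) ht.le)) (by gcongr)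
  calc hopfLaxQ L g (t + s) x
      ≤ (t + s) * L (dist x y / (t + s)) + g y := hopfLaxQ_le hsuper hbdd hg (by positivity) x y
    _ ≤ (t + s) * L (dist x y / t) + g y := by gcongr
    _ = t * L (dist x y / t) + g y + s * L (dist x y / t) := by ring
    _ ≤ hopfLaxQ L g t x + s + s * L (ρ / t) :=
        add_le_add (by linarith [min_le_left s 1]) (by gcongr)
    _ = hopfLaxQ L g t x + (L (ρ / t) + 1) * s := by ring

theorem eventually_sub_le_mul_dist_of_metricSubgradient_lt (hf : LipschitzWith K f) {x : X} {p : ℝ}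
    (hp : metricSubgradient f x < p) : ∀ᶠ y in 𝓝 x, f x - f y ≤ p * dist x y := by
  have hquot : IsBoundedUnder (· ≤ ·) (𝓝[≠] x) fun y => max (f x - f y) 0 / dist y x :=
    isBoundedUnder_of ⟨K, fun y => div_le_of_le_mul₀ dist_nonneg K.coe_nonneg <| by
      rw [dist_comm]
      exact max_le (sub_le_iff_le_add'.2 (hf.le_add_mul x y)) (by positivity)⟩
  filter_upwards [eventually_nhdsWithin_iff.1 (eventually_lt_of_limsup_lt hp hquot)] with y hy
  rcases eq_or_ne y x with rfl | hyx
  · simp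
  · have hlt := (div_lt_iff₀ (dist_pos.2 hyx)).1 (hy hyx)
    rw [dist_comm] at hlt
    exact (le_max_left _ _).trans hlt.le

theorem eventually_sub_mul_le_hopfLaxQ (hsuper : IsSuperlinear L)
    (hbdd : BddBelow (L '' Set.Ici 0)) (hf : LipschitzWith K f) {x : X} {c : ℝ}
    (hc : legendreH L (metricSubgradient f x) < c) :
    ∀ᶠ s in 𝓝[>] (0 : ℝ), f x - c * s ≤ hopfLaxQ L f s x := by
  obtain ⟨p, hpc, hp⟩ : ∃ p, legendreH L p < c ∧ metricSubgradient f x < p :=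
    (((hsuper.continuous_legendreH hbdd).continuousWithinAt.eventually_lt_const hc).and
      (eventually_mem_nhdsWithin (s := Set.Ioi _))).exists
  obtain ⟨R, hfar, hR⟩ : ∃ R, (∀ v ≥ R, K * v + -c ≤ L v) ∧ 0 < R := by
    obtain ⟨R, hR⟩ := eventually_atTop.1 (hsuper.eventually_mul_add_le K (-c))
    exact ⟨max R 1, fun v hv => hR v (le_of_max_le_left hv), by positivity⟩
  obtain ⟨δ, hδ, hnear⟩ :=
    Metric.eventually_nhds_iff.1 (eventually_sub_le_mul_dist_of_metricSubgradient_lt hf hp)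
  filter_upwards [Ioo_mem_nhdsGT (div_pos hδ hR)] with s ⟨hs, hsδ⟩
  refine le_hopfLaxQ hs x fun y => ?_
  set v := dist x y / s with hv
  have hv0 : 0 ≤ v := by positivity
  have hdist : dist x y = s * v := by rw [hv]; field_simp
  suffices f x - f y ≤ s * (L v + c) by linarith
  rcases le_or_gt R v with hRv | hvR
  · calc f x - f y ≤ K * dist x y := sub_le_iff_le_add'.2 (hf.le_add_mul x y)
      _ = s * (K * v) := by rw [hdist]; ring
      _ ≤ s * (L v + c) := by gcongr; linarith [hfar v hRv]
  · have hyδ : dist y x < δ := by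
      rw [dist_comm, hdist]
      exact (mul_lt_mul_of_pos_left hvR hs).trans ((lt_div_iff₀ hR).1 hsδ)
    calc f x - f y ≤ p * dist x y := hnear hyδ
      _ = s * (p * v) := by rw [hdist]; ring
      _ ≤ s * (L v + c) := by
          gcongr
          linarith [hsuper.mul_sub_le_legendreH hbdd p hv0]

end HopfLax

theorem hopfLax_liminf_lower_bound_general {X : Type*} [MetricSpace X] (hgeo : IsGeodesicSpace X)
    {L : ℝ → ℝ} (hmono : MonotoneOn L (Set.Ici 0)) (hsuper : IsSuperlinear L)
    {g : X → ℝ} {K : ℝ≥0} (hg : LipschitzWith K g) (x : X) {t : ℝ} (ht : 0 < t) :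
    -legendreH L (metricSubgradient (hopfLaxQ L g t) x) ≤
      liminf (fun s => (hopfLaxQ L g (t + s) x - hopfLaxQ L g t x) / s) (𝓝[>] (0 : ℝ)) := by
  -- In `ℝ` the `liminf` of a quantity tending to `+∞` has the junk value `0`.
  have hcobdd : IsCoboundedUnder (· ≥ ·) (𝓝[>] (0 : ℝ))
      fun s => (hopfLaxQ L g (t + s) x - hopfLaxQ L g t x) / s := by
    obtain ⟨C, hC⟩ := exists_hopfLaxQ_add_le hmono hsuper hg ht x
    refine IsBoundedUnder.isCoboundedUnder_ge (isBoundedUnder_of_eventually_le (a := C) ?_)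
    filter_upwards [self_mem_nhdsWithin] with s (hs : 0 < s)
    exact (div_le_iff₀ hs).2 (by linarith [hC s hs])
  refine le_of_forall_lt_imp_le_of_dense fun a ha => le_liminf_of_le hcobdd ?_
  filter_upwards [self_mem_nhdsWithin, eventually_sub_mul_le_hopfLaxQ hsuper
    (bddBelow_image_Ici_of_monotoneOn hmono) (hgeo.lipschitzWith_hopfLaxQ hmono hsuper hg ht)
    (lt_neg_of_lt_neg ha)] with s (hs : 0 < s) hstep
  have hsemigroup := hgeo.hopfLaxQ_hopfLaxQ_le hmono hsuper hg hs ht x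
  exact (le_div_iff₀ hs).2 (by linarith)

/-- For every `x ∈ X` and `t > 0`,
`liminf_{s → 0⁺} (Q_{t+s} g(x) − Q_t g(x))/s ≥ −H(|∇⁻ Q_t g|(x))`. -/
theorem hopfLax_liminf_lower_bound
    {X : Type*} [MetricSpace X] [ProperSpace X] [Nonempty X]
    (hgeo : ∀ x y : X, ∀ τ : ℝ, 0 ≤ τ → τ ≤ 1 →
      ∃ z : X, dist x z = τ * dist x y ∧ dist z y = (1 - τ) * dist x y)
    (L : ℝ → ℝ) (hL0 : L 0 = 0)
    (hLnonneg : ∀ u, 0 ≤ u → 0 ≤ L u)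
    (hLmono : MonotoneOn L (Set.Ici 0))
    (hLconv : ConvexOn ℝ (Set.Ici 0) L)
    (hLsuper : Tendsto (fun u => L u / u) atTop atTop)
    (g : X → ℝ) (hg : ∃ K : ℝ≥0, LipschitzWith K g)
    (x : X) (t : ℝ) (ht : 0 < t) :
    -legendreH L (metricSubgradient (fun y => hopfLaxQ L g t y) x) ≤
      liminf (fun s => (hopfLaxQ L g (t + s) x - hopfLaxQ L g t x) / s) (𝓝[>] (0:ℝ)) := by
  obtain ⟨K, hg⟩ := hg
  exact hopfLax_liminf_lower_bound_general hgeo hLmono hLsuper hg x ht
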